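/- A DMRL random variable is smaller in the convex order than the exponential random variable with the same mean: If Y is a positive integrable random variable with the DMRL property and Y^e is exponentially distributed with E[Y^e] = E[Y], then E[φ(Y)] ≤ E[φ(Y^e)] for every convex function φ : ℝ → ℝ for which both expectations are finite. -/

import Mathlib

open MeasureTheory ProbabilityTheory

/-- Mean residual life of a random variable `X` at time `t`: `E[X − t | X > t]`. -/
noncomputable def mrl {Ω : Type*} [MeasurableSpace Ω] (P : Measure Ω) (X : Ω → ℝ) (t : ℝ) : ℝ :=
  (∫ ω in {ω | t < X ω}, (X ω - t) ∂P) / (P {ω | t < X ω}).toReal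

open Set Filter Topology

lemma aux_mono (F G : ℝ → ENNReal) (hF : Measurable F) (hG : Measurable G)
    (h : ∀ a : ℝ, 0 ≤ a → ∫⁻ t in Ioi a, F t ≤ ∫⁻ t in Ioi a, G t)
    (f : ℝ → ℝ) (hf : Monotone f) (hf0 : f 0 = 0) :
    ∫⁻ t in Ioi 0, F t * ENNReal.ofReal (f t) ≤ ∫⁻ t in Ioi 0, G t * ENNReal.ofReal (f t) := by
  have key : ∀ H : ℝ → ENNReal, Measurable H →
      ∫⁻ t in Ioi 0, H t * ENNReal.ofReal (f t) =
        ∫⁻ u in Ioi (0:ℝ), ((volume.restrict (Ioi 0)).withDensity H) {t | u < f t} := by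
    intro H hH
    rw [← lintegral_eq_lintegral_meas_lt _ _ hf.measurable.aemeasurable]
    · rw [lintegral_withDensity_eq_lintegral_mul _ hH hf.measurable.ennreal_ofReal]
      rfl
    · apply (withDensity_absolutelyContinuous _ H).ae_le
      filter_upwards [ae_restrict_mem measurableSet_Ioi] with t ht
      have := hf (le_of_lt ht)
      simpa [hf0] using this
  rw [key F hF, key G hG]
  apply setLIntegral_mono' measurableSet_Ioi
  intro u hu
  have hu : 0 < u := hu
  have hm : MeasurableSet {t | u < f t} := measurableSet_lt measurable_const hf.measurable
  rw [withDensity_apply _ hm, withDensity_apply _ hm, Measure.restrict_restrict hm]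
  rcases eq_empty_or_nonempty {t | u < f t} with he | hne
  · simp [he]
  have hsub : {t | u < f t} ⊆ Ioi 0 := by
    intro t ht
    by_contra hc
    have h1 := hf (not_lt.mp hc)
    have h2 : u < f t := ht
    linarith
  have hbdd : BddBelow {t | u < f t} := ⟨0, fun t ht => le_of_lt (hsub ht)⟩
  rw [inter_eq_left.mpr hsub]
  set a := sInf {t | u < f t} with ha
  have ha0 : 0 ≤ a := le_csInf hne fun t ht => le_of_lt (hsub ht)
  have h1 : Ioi a ⊆ {t | u < f t} := by
    intro t ht
    obtain ⟨s, hs, hst⟩ := (csInf_lt_iff hbdd hne).mp ht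
    exact lt_of_lt_of_le hs (hf hst.le)
  have h2 : {t | u < f t} ⊆ Ici a := fun t ht => csInf_le hbdd ht
  have h3 : ({t | u < f t} : Set ℝ) =ᵐ[volume] Ioi a :=
    Filter.EventuallyLE.antisymm
      ((HasSubset.Subset.eventuallyLE h2).trans Ioi_ae_eq_Ici.symm.le)
      (HasSubset.Subset.eventuallyLE h1)
  rw [Measure.restrict_congr_set h3]
  exact h a ha0

lemma aux_stoploss {Ω : Type*} [MeasurableSpace Ω] (P : Measure Ω) (Y : Ω → ℝ)
    (hY : Measurable Y) (a : ℝ) :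
    ∫⁻ t in Ioi a, P {ω | t < Y ω} = ∫⁻ ω, ENNReal.ofReal (max (Y ω - a) 0) ∂P := by
  rw [lintegral_eq_lintegral_meas_lt (f := fun ω => max (Y ω - a) 0) P (Eventually.of_forall fun ω => le_max_right _ _)
    ((hY.sub_const a).max measurable_const).aemeasurable]
  have := (measurePreserving_add_right (volume : Measure ℝ) a).setLIntegral_comp_preimage_emb
    (MeasurableEquiv.addRight a).measurableEmbedding (fun t => P {ω | t < Y ω}) (Ioi a)
  rw [← this]
  have h2 : (fun x => x + a) ⁻¹' Ioi a = Ioi (0:ℝ) := by ext; simp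
  rw [h2]
  apply setLIntegral_congr_fun measurableSet_Ioi
  intro t ht
  have ht : 0 < t := ht
  dsimp only
  congr 1
  ext ω
  simp [lt_sub_iff_add_lt, ht.not_gt]

lemma aux_exp_tail (r : ℝ) (hr : 0 < r) (a : ℝ) :
    ∫⁻ t in Ioi a, ENNReal.ofReal (Real.exp (-(r * t))) =
      ENNReal.ofReal (Real.exp (-(r * a)) / r) := by
  have h1 := integrableOn_exp_mul_Ioi (neg_lt_zero.mpr hr) a
  have h2 := integral_exp_mul_Ioi (neg_lt_zero.mpr hr) a
  simp only [neg_mul] at h1 h2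
  rw [← ofReal_integral_eq_lintegral_ofReal h1 (Eventually.of_forall fun x => (Real.exp_pos _).le),
    h2, neg_div_neg_eq]

lemma aux_expMeasure (r : ℝ) (hr : 0 < r) (t : ℝ) (ht : 0 ≤ t) :
    expMeasure r (Ioi t) = ENNReal.ofReal (Real.exp (-(r * t))) := by
  have := isProbabilityMeasure_expMeasure hr
  have h := cdf_expMeasure_eq hr t
  rw [cdf_eq_real, if_pos ht] at h
  have h2 := probReal_compl_eq_one_sub (μ := expMeasure r) (measurableSet_Iic (a := t))
  rw [compl_Iic, h] at h2
  rw [← ofReal_measureReal, h2]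
  congr 1
  ring

lemma aux_bound {Ω : Type*} [MeasurableSpace Ω] (P : Measure Ω) [IsProbabilityMeasure P]
    (Y : Ω → ℝ) (hYmeas : Measurable Y) (hYpos : ∀ᵐ ω ∂P, 0 < Y ω)
    (hYint : Integrable Y P)
    (hDMRL : ∀ s t : ℝ, 0 ≤ s → s ≤ t → 0 < P {ω | t < Y ω} →
      mrl P Y t ≤ mrl P Y s)
    (r : ℝ) (hr : 0 < r) (hm : ∫ ω, Y ω ∂P = 1 / r) (t : ℝ) (ht : 0 ≤ t) :
    ∫ ω, max (Y ω - t) 0 ∂P ≤ Real.exp (-(r * t)) / r := by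
  set p : ℝ → ℝ := fun a => ∫ ω, max (Y ω - a) 0 ∂P with hp
  have hint : ∀ a, Integrable (fun ω => max (Y ω - a) 0) P := fun a =>
    (hYint.sub (integrable_const a)).pos_part
  have hms : ∀ a, MeasurableSet {ω | a < Y ω} := fun a => measurableSet_lt measurable_const hYmeas
  have hset : ∀ a, ∫ ω in {ω | a < Y ω}, (Y ω - a) ∂P = p a := by
    intro a
    rw [← integral_indicator (hms a)]
    apply integral_congr_ae
    refine Eventually.of_forall fun ω => ?_
    by_cases h : a < Y ω
    · simp [indicator, h, h.le]
    · simp [indicator, h, not_lt.mp h]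
  have hp0 : p 0 = 1 / r := by
    rw [← hm]
    apply integral_congr_ae
    filter_upwards [hYpos] with ω h
    simp [h.le]
  have hmrl0 : mrl P Y 0 = 1 / r := by
    have : P {ω | 0 < Y ω} = 1 := by
      exact prob_compl_eq_zero_iff (hms 0) |>.mp hYpos
    rw [mrl, hset, this, hp0]; simp
  have hle : ∀ b, 0 ≤ b → p b * r ≤ (P {ω | b < Y ω}).toReal := by
    intro b hb
    by_cases hz : P {ω | b < Y ω} = 0
    · rw [← hset b, Measure.restrict_eq_zero.mpr hz]; simp
    · have h1 := hDMRL 0 b le_rfl hb (pos_iff_ne_zero.mpr hz)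
      have hpos : 0 < (P {ω | b < Y ω}).toReal := ENNReal.toReal_pos hz (measure_ne_top _ _)
      rw [hmrl0, mrl, hset, div_le_div_iff₀ hpos hr] at h1
      linarith
  have hpn : ∀ a, 0 ≤ p a := fun a => integral_nonneg fun ω => le_max_right _ _
  have hstep : ∀ a b, 0 ≤ a → a ≤ b → p b * (1 + r * (b - a)) ≤ p a := by
    intro a b ha hab
    have h1 : (b - a) * (P {ω | b < Y ω}).toReal ≤ p a - p b := by
      rw [hp]
      dsimp only
      rw [← integral_sub (hint a) (hint b)]
      have : (b - a) * (P {ω | b < Y ω}).toReal =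
          ∫ ω, ({ω | b < Y ω}).indicator (fun _ => b - a) ω ∂P := by
        rw [integral_indicator_const _ (hms b)]
        simp [measureReal_def, mul_comm]
      rw [this]
      apply integral_mono ((integrable_const _).indicator (hms b)) ((hint a).sub (hint b))
      intro ω
      by_cases h : b < Y ω
      · have h' : a ≤ Y ω := hab.trans h.le
        simp [indicator, h, h.le, h']
      · simp only [indicator, mem_ofPred_eq, h, if_false]
        have : max (Y ω - b) 0 ≤ max (Y ω - a) 0 := max_le_max (by linarith) le_rfl
        exact sub_nonneg.mpr this
    have h2 := hle b (ha.trans hab)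
    nlinarith [mul_le_mul_of_nonneg_left h2 (sub_nonneg.mpr hab)]
  have hiter : ∀ d : ℝ, 0 ≤ d → ∀ n : ℕ, p (n * d) * (1 + r * d) ^ n ≤ 1 / r := by
    intro d hd n
    induction n with
    | zero => simp [hp0]
    | succ n ih =>
      refine le_trans ?_ ih
      have h1 := hstep (n * d) ((n + 1 : ℕ) * d) (by positivity)
        (by push_cast; nlinarith)
      have h2 : ((n + 1 : ℕ) : ℝ) * d - n * d = d := by push_cast; ring
      rw [h2] at h1
      have : 0 ≤ (1 + r * d) ^ n := by positivity
      calc _ = p ((n + 1 : ℕ) * d) * (1 + r * d) * (1 + r * d) ^ n := by ring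
        _ ≤ _ := mul_le_mul_of_nonneg_right h1 this
  have hlim : Tendsto (fun n : ℕ => p t * (1 + r * t / n) ^ n) atTop (𝓝 (p t * Real.exp (r * t))) :=
    (Real.tendsto_one_add_div_pow_exp (r * t)).const_mul _
  have hfin : p t * Real.exp (r * t) ≤ 1 / r := by
    apply le_of_tendsto hlim
    filter_upwards [eventually_gt_atTop 0] with n hn
    have hn' : (n : ℝ) ≠ 0 := by positivity
    have := hiter (t / n) (by positivity) n
    rwa [mul_div_cancel₀ _ hn', ← mul_div_assoc] at this
  rw [Real.exp_neg]
  have he := Real.exp_pos (r * t)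
  have : p t ≤ (1 / r) / Real.exp (r * t) := (le_div_iff₀ he).mpr hfin
  calc p t ≤ _ := this
    _ = _ := by field_simp

/-- **A DMRL random variable is smaller in the convex order than the exponential random
variable with the same mean:** if `Y` is positive, integrable, with decreasing mean residual
life, and `Ye` is exponentially distributed with `E[Ye] = E[Y]`, then `E[φ(Y)] ≤ E[φ(Ye)]`
for every convex `φ : ℝ → ℝ` with both expectations finite. -/
theorem DMRL_le_cx_exponential
    {Ω : Type*} [MeasurableSpace Ω] (P : Measure Ω) [IsProbabilityMeasure P]
    {Ω' : Type*} [MeasurableSpace Ω'] (Q : Measure Ω') [IsProbabilityMeasure Q]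
    (Y : Ω → ℝ) (Ye : Ω' → ℝ)
    (hYmeas : Measurable Y) (hYemeas : Measurable Ye)
    (hYpos : ∀ᵐ ω ∂P, 0 < Y ω)
    (hYint : Integrable Y P)
    (hDMRL : ∀ s t : ℝ, 0 ≤ s → s ≤ t → 0 < P {ω | t < Y ω} →
      mrl P Y t ≤ mrl P Y s)
    (r : ℝ) (hr : 0 < r)
    (hYeexp : Q.map Ye = expMeasure r)
    (hYemean : ∫ ω, Ye ω ∂Q = ∫ ω, Y ω ∂P)
    (φ : ℝ → ℝ) (hφ : ConvexOn ℝ Set.univ φ)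
    (hφY : Integrable (fun ω => φ (Y ω)) P)
    (hφYe : Integrable (fun ω => φ (Ye ω)) Q) :
    ∫ ω, φ (Y ω) ∂P ≤ ∫ ω, φ (Ye ω) ∂Q := by
  have hcont : Continuous φ := by
    rw [← continuousOn_univ]
    simpa using hφ.continuousOn_interior
  set c := derivWithin φ (Ioi 0) 0 with hc
  set f : ℝ → ℝ := fun x => derivWithin φ (Ioi x) x - c with hf
  have hfm : Monotone f := by
    have := hφ.monotoneOn_rightDeriv
    rw [interior_univ, monotoneOn_univ] at this
    exact fun x y h => sub_le_sub_right (this h) c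
  have hf0 : f 0 = 0 := by simp [hf, hc]
  have hFTC : ∀ x, ∫ t in (0:ℝ)..x, f t = φ x - c * x - φ 0 := by
    intro x
    have := intervalIntegral.integral_eq_sub_of_hasDeriv_right (a := 0) (b := x)
      (f := fun y => φ y - c * y) (f' := f) (by fun_prop) ?_ (hfm.intervalIntegrable)
    · simpa using this
    · intro y _
      have h1 := hφ.hasDerivWithinAt_rightDeriv_of_mem_interior (x := y) (by simp)
      have h2 := ((hasDerivAt_id y).const_mul c).hasDerivWithinAt (s := Ioi y)
      rw [mul_one] at h2
      exact h1.sub h2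
  have hfn : ∀ x, 0 ≤ x → 0 ≤ f x := fun x hx => hf0 ▸ hfm hx
  have hψn : ∀ x, 0 ≤ x → 0 ≤ φ x - c * x - φ 0 := by
    intro x hx
    rw [← hFTC]
    exact intervalIntegral.integral_nonneg hx fun u hu => hfn u hu.1
  have hae : ∀ᵐ t ∂volume.restrict (Ioi (0:ℝ)), 0 ≤ f t := by
    filter_upwards [ae_restrict_mem measurableSet_Ioi] with t ht using hfn t (le_of_lt ht)
  have htail : ∀ t, 0 ≤ t → Q {ω | t < Ye ω} = ENNReal.ofReal (Real.exp (-(r * t))) := by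
    intro t ht
    rw [← aux_expMeasure r hr t ht, ← hYeexp, Measure.map_apply hYemeas measurableSet_Ioi]
    rfl
  have hYe0 : ∀ᵐ ω ∂Q, 0 < Ye ω := by
    have h := htail 0 le_rfl
    simp only [mul_zero, neg_zero, Real.exp_zero, ENNReal.ofReal_one] at h
    exact (prob_compl_eq_zero_iff (measurableSet_lt measurable_const hYemeas)).mpr h
  have hYel : ∫⁻ ω, ENNReal.ofReal (Ye ω) ∂Q = ENNReal.ofReal (1 / r) := by
    rw [lintegral_eq_lintegral_meas_lt Q (hYe0.mono fun ω h => le_of_lt h) hYemeas.aemeasurable,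
      setLIntegral_congr_fun measurableSet_Ioi (fun t ht => htail t (le_of_lt ht)),
      aux_exp_tail r hr]
    simp
  have hYen : 0 ≤ᵐ[Q] Ye := hYe0.mono fun ω h => le_of_lt h
  have hYn : 0 ≤ᵐ[P] Y := hYpos.mono fun ω h => le_of_lt h
  have hYeint : Integrable Ye Q := by
    rw [← lintegral_ofReal_ne_top_iff_integrable hYemeas.aestronglyMeasurable hYen, hYel]
    exact ENNReal.ofReal_ne_top
  have hm : ∫ ω, Y ω ∂P = 1 / r := by
    rw [← hYemean, integral_eq_lintegral_of_nonneg_ae hYen hYemeas.aestronglyMeasurable, hYel,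
      ENNReal.toReal_ofReal (by positivity)]
  have hcomp : ∫⁻ t in Ioi 0, P {ω | t < Y ω} * ENNReal.ofReal (f t) ≤
      ∫⁻ t in Ioi 0, Q {ω | t < Ye ω} * ENNReal.ofReal (f t) := by
    apply aux_mono _ _ _ _ _ f hfm hf0
    · exact Antitone.measurable fun s t hst => measure_mono fun ω h => lt_of_le_of_lt hst h
    · exact Antitone.measurable fun s t hst => measure_mono fun ω h => lt_of_le_of_lt hst h
    · intro a ha
      rw [aux_stoploss P Y hYmeas a, setLIntegral_congr_fun measurableSet_Ioi
        (fun t ht => htail t (ha.trans (le_of_lt ht))), aux_exp_tail r hr,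
        ← ofReal_integral_eq_lintegral_ofReal (f := fun ω => max (Y ω - a) 0)
          ((hYint.sub (integrable_const a)).pos_part)
          (Eventually.of_forall fun ω => le_max_right _ _)]
      exact ENNReal.ofReal_le_ofReal
        (aux_bound P Y hYmeas hYpos hYint hDMRL r hr hm a ha)
  rw [← lintegral_comp_eq_lintegral_meas_lt_mul P hYn hYmeas.aemeasurable
      (fun t _ => hfm.intervalIntegrable) hae,
    ← lintegral_comp_eq_lintegral_meas_lt_mul Q hYen hYemeas.aemeasurable
      (fun t _ => hfm.intervalIntegrable) hae] at hcomp
  simp only [hFTC] at hcomp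
  have i1 : Integrable (fun ω => φ (Y ω) - c * Y ω - φ 0) P :=
    (hφY.sub (hYint.const_mul c)).sub (integrable_const _)
  have i2 : Integrable (fun ω => φ (Ye ω) - c * Ye ω - φ 0) Q :=
    (hφYe.sub (hYeint.const_mul c)).sub (integrable_const _)
  have j1 : Integrable (fun ω => φ (Y ω) - c * Y ω) P := hφY.sub (hYint.const_mul c)
  have j2 : Integrable (fun ω => φ (Ye ω) - c * Ye ω) Q := hφYe.sub (hYeint.const_mul c)
  rw [← ofReal_integral_eq_lintegral_ofReal i1 (hYn.mono fun ω h => hψn _ h),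
    ← ofReal_integral_eq_lintegral_ofReal i2 (hYen.mono fun ω h => hψn _ h),
    ENNReal.ofReal_le_ofReal_iff (integral_nonneg_of_ae (hYen.mono fun ω h => hψn _ h)),
    integral_sub j1 (integrable_const _),
    integral_sub j2 (integrable_const _),
    integral_sub hφY (hYint.const_mul c), integral_sub hφYe (hYeint.const_mul c),
    integral_const_mul, integral_const_mul, hYemean] at hcomp
  simp only [integral_const, probReal_univ, smul_eq_mul, one_mul] at hcomp
  linarith
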